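/- If T is an induced SPN of a complete and decomposable SPN S over Boolean variables X_1,...,X_N whose root has scope {X_1,...,X_N}, then for every variable X_n there is exactly one leaf of S that is an indicator over X_n among the nodes of T. -/

import Mathlib

inductive NodeKind
  | sum
  | prod
  | leaf
deriving DecidableEq

/-- A sum-product network over `N` Boolean variables, with node set `V`:
a rooted DAG (acyclicity witnessed by a rank function) whose leaves are
indicator variables and whose internal nodes are sum or product nodes. -/
structure SPN (V : Type) [Fintype V] [DecidableEq V] (N : ℕ) where
  root : V
  kind : V → NodeKind
  children : V → Finset V
  leaf_children : ∀ v, kind v = NodeKind.leaf → children v = ∅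
  internal_nonempty : ∀ v, kind v ≠ NodeKind.leaf → (children v).Nonempty
  root_no_parent : ∀ u, root ∉ children u
  leafVar : V → Fin N
  leafSign : V → Bool
  rank : V → ℕ
  rank_lt : ∀ v, ∀ u ∈ children v, rank u < rank v

namespace SPN

variable {V : Type} [Fintype V] [DecidableEq V] {N : ℕ}

/-- The value `f_v(·|w)` of every node, where `w` assigns a weight to every
edge `(v,u)` out of a sum node and `L` gives the value of every leaf. -/
noncomputable def evalWith (S : SPN V N) (w : V × V → ℝ) (L : V → ℝ) (v : V) : ℝ :=
  match S.kind v with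
  | NodeKind.leaf => L v
  | NodeKind.sum => ∑ u ∈ (S.children v).attach, w (v, u.1) * S.evalWith w L u.1
  | NodeKind.prod => ∏ u ∈ (S.children v).attach, S.evalWith w L u.1
termination_by S.rank v
decreasing_by
  · exact S.rank_lt v u.1 u.2
  · exact S.rank_lt v u.1 u.2

/-- The leaf values determined by an input `x ∈ {0,1}^N`: the leaf over
variable `X_n` is the indicator `I[x_n = leafSign]`. -/
def ind (S : SPN V N) (x : Fin N → Bool) (v : V) : ℝ :=
  if x (S.leafVar v) = S.leafSign v then 1 else 0

/-- The scope of a node: its variable at a leaf, the union of the scopes of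
the children at an internal node. -/
noncomputable def scope (S : SPN V N) (v : V) : Finset (Fin N) :=
  match S.kind v with
  | NodeKind.leaf => {S.leafVar v}
  | NodeKind.sum => (S.children v).attach.sup fun u => S.scope u.1
  | NodeKind.prod => (S.children v).attach.sup fun u => S.scope u.1
termination_by S.rank v
decreasing_by
  · exact S.rank_lt v u.1 u.2
  · exact S.rank_lt v u.1 u.2

/-- An SPN is complete if all children of every sum node have the same scope. -/
def Complete (S : SPN V N) : Prop :=
  ∀ v, S.kind v = NodeKind.sum →
    ∀ u₁ ∈ S.children v, ∀ u₂ ∈ S.children v, S.scope u₁ = S.scope u₂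

/-- An SPN is decomposable if the children of every product node have
pairwise disjoint scopes. -/
def Decomposable (S : SPN V N) : Prop :=
  ∀ v, S.kind v = NodeKind.prod →
    ∀ u₁ ∈ S.children v, ∀ u₂ ∈ S.children v, u₁ ≠ u₂ →
      Disjoint (S.scope u₁) (S.scope u₂)

/-- `(TV, TE)` is an induced SPN (induced tree) of `S`: a subgraph of `S`,
generated from the root, containing exactly one child of every sum node it
contains and all children of every product node it contains, together with
the corresponding edges. -/
structure IsInducedTree (S : SPN V N) (TV : Finset V) (TE : Finset (V × V)) : Prop where
  root_mem : S.root ∈ TV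
  edges_sub : ∀ e ∈ TE, e.1 ∈ TV ∧ e.2 ∈ TV ∧ e.2 ∈ S.children e.1
  reach : ∀ v ∈ TV, v ≠ S.root → ∃ u, (u, v) ∈ TE
  sum_unique : ∀ v ∈ TV, S.kind v = NodeKind.sum → ∃! u, u ∈ S.children v ∧ u ∈ TV
  sum_edge : ∀ v ∈ TV, S.kind v = NodeKind.sum → ∀ u ∈ S.children v, u ∈ TV → (v, u) ∈ TE
  prod_mem : ∀ v ∈ TV, S.kind v = NodeKind.prod → ∀ u ∈ S.children v, u ∈ TV
  prod_edge : ∀ v ∈ TV, S.kind v = NodeKind.prod → ∀ u ∈ S.children v, (v, u) ∈ TE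

end SPN

/-! Fix a variable `X_n` and look at the nodes of `T` whose scope contains it. Completeness passes
`X_n` down from every such internal node to some child in `T`, so one of lowest rank is a leaf over
`X_n`. Decomposability, and the single child kept at each sum node, let at most one edge of `T`
leave each node towards a node with `X_n` in its scope; following these edges from the root is
therefore deterministic, and it visits every node with `X_n` in its scope, so that only one of them
can be a leaf. -/

namespace SPN

variable {V : Type} [Fintype V] [DecidableEq V] {N : ℕ} {S : SPN V N} {u v : V} {n : Fin N}

theorem kind_ne_leaf_of_mem_children (h : u ∈ S.children v) : S.kind v ≠ NodeKind.leaf :=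
  fun hv ↦ Finset.ne_empty_of_mem h (S.leaf_children v hv)

theorem scope_eq_singleton_of_kind_eq_leaf (hv : S.kind v = NodeKind.leaf) :
    S.scope v = {S.leafVar v} := by
  rw [scope, hv]

theorem leafVar_mem_scope (hv : S.kind v = NodeKind.leaf) : S.leafVar v ∈ S.scope v := by
  rw [scope_eq_singleton_of_kind_eq_leaf hv, Finset.mem_singleton]

theorem mem_scope_iff_exists_mem_children (hv : S.kind v ≠ NodeKind.leaf) :
    n ∈ S.scope v ↔ ∃ u ∈ S.children v, n ∈ S.scope u := by
  rw [scope]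
  cases hk : S.kind v with
  | leaf => exact absurd hk hv
  | sum | prod => simp [Finset.mem_sup]

theorem scope_subset_of_mem_children (h : u ∈ S.children v) : S.scope u ⊆ S.scope v :=
  fun _ hn ↦ (mem_scope_iff_exists_mem_children (kind_ne_leaf_of_mem_children h)).2 ⟨u, h, hn⟩

theorem wellFounded_rank_gt (S : SPN V N) : WellFounded fun u v ↦ S.rank v < S.rank u :=
  haveI : IsTrans V fun u v ↦ S.rank v < S.rank u := ⟨fun _ _ _ h₁ h₂ ↦ h₂.trans h₁⟩
  haveI : Std.Irrefl fun u v ↦ S.rank v < S.rank u := ⟨fun v ↦ lt_irrefl (S.rank v)⟩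
  Finite.wellFounded_of_trans_of_irrefl _

/-- The edges of a subgraph with edge set `TE` that lead to a node with `X_n` in its scope; the
paths they form are those along which an induced tree hands `X_n` down to its leaves. -/
def ScopeEdge (S : SPN V N) (TE : Finset (V × V)) (n : Fin N) (u v : V) : Prop :=
  (u, v) ∈ TE ∧ n ∈ S.scope v

namespace IsInducedTree

variable {TV : Finset V} {TE : Finset (V × V)}

theorem exists_child_mem_scope (hT : S.IsInducedTree TV TE) (hC : S.Complete) (hv : v ∈ TV)
    (hk : S.kind v ≠ NodeKind.leaf) (hn : n ∈ S.scope v) :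
    ∃ u ∈ S.children v, u ∈ TV ∧ n ∈ S.scope u := by
  obtain ⟨c, hc, hcn⟩ := (mem_scope_iff_exists_mem_children hk).1 hn
  cases hkv : S.kind v with
  | leaf => exact absurd hkv hk
  | sum =>
    obtain ⟨u, hu, huT⟩ := (hT.sum_unique v hv hkv).exists
    exact ⟨u, hu, huT, hC v hkv c hc u hu ▸ hcn⟩
  | prod => exact ⟨c, hc, hT.prod_mem v hv hkv c hc, hcn⟩

theorem exists_leaf_of_mem_scope (hT : S.IsInducedTree TV TE) (hC : S.Complete) (hv : v ∈ TV)
    (hn : n ∈ S.scope v) : ∃ u ∈ TV, S.kind u = NodeKind.leaf ∧ S.leafVar u = n := by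
  obtain ⟨u, hu, hmin⟩ := Finset.exists_min_image {u ∈ TV | n ∈ S.scope u} S.rank
    ⟨v, Finset.mem_filter.2 ⟨hv, hn⟩⟩
  obtain ⟨huT, hun⟩ := Finset.mem_filter.1 hu
  have hleaf : S.kind u = NodeKind.leaf := by
    by_contra hk
    obtain ⟨c, hc, hcT, hcn⟩ := hT.exists_child_mem_scope hC huT hk hun
    exact (S.rank_lt u c hc).not_ge (hmin c (Finset.mem_filter.2 ⟨hcT, hcn⟩))
  rw [scope_eq_singleton_of_kind_eq_leaf hleaf, Finset.mem_singleton] at hun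
  exact ⟨u, huT, hleaf, hun.symm⟩

theorem rightUnique_scopeEdge (hT : S.IsInducedTree TV TE) (hD : S.Decomposable) (n : Fin N) :
    Relator.RightUnique (S.ScopeEdge TE n) := by
  rintro u v w ⟨huv, hnv⟩ ⟨huw, hnw⟩
  obtain ⟨huT, hvT, hv⟩ := hT.edges_sub _ huv
  obtain ⟨-, hwT, hw⟩ := hT.edges_sub _ huw
  cases hk : S.kind u with
  | leaf => exact absurd hk (kind_ne_leaf_of_mem_children hv)
  | sum => exact (hT.sum_unique u huT hk).unique ⟨hv, hvT⟩ ⟨hw, hwT⟩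
  | prod =>
    by_contra hne
    exact Finset.disjoint_left.1 (hD u hk v hv w hw hne) hnv hnw

theorem reflTransGen_scopeEdge_root (hT : S.IsInducedTree TV TE) (hv : v ∈ TV)
    (hn : n ∈ S.scope v) : Relation.ReflTransGen (S.ScopeEdge TE n) S.root v := by
  induction v using S.wellFounded_rank_gt.induction with
  | _ v ih =>
    obtain rfl | hroot := eq_or_ne v S.root
    · exact .refl
    · obtain ⟨u, huv⟩ := hT.reach v hv hroot
      obtain ⟨huT, -, hchild⟩ := hT.edges_sub _ huv
      exact (ih u (S.rank_lt u v hchild) huT (scope_subset_of_mem_children hchild hn)).tail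
        ⟨huv, hn⟩

theorem eq_of_reflTransGen_scopeEdge_of_kind_eq_leaf (hT : S.IsInducedTree TV TE)
    (hu : S.kind u = NodeKind.leaf) (h : Relation.ReflTransGen (S.ScopeEdge TE n) u v) :
    u = v := by
  obtain rfl | ⟨c, ⟨huc, -⟩, -⟩ := h.cases_head
  · rfl
  · exact absurd hu (kind_ne_leaf_of_mem_children (hT.edges_sub _ huc).2.2)

theorem injOn_leafVar (hT : S.IsInducedTree TV TE) (hD : S.Decomposable) :
    Set.InjOn S.leafVar {v | v ∈ TV ∧ S.kind v = NodeKind.leaf} := by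
  rintro u ⟨huT, hu⟩ v ⟨hvT, hv⟩ huv
  have hru := hT.reflTransGen_scopeEdge_root huT (leafVar_mem_scope hu)
  have hrv := hT.reflTransGen_scopeEdge_root hvT (huv ▸ leafVar_mem_scope hv)
  obtain h | h := Relation.ReflTransGen.total_of_right_unique
    (hT.rightUnique_scopeEdge hD (S.leafVar u)) hru hrv
  · exact hT.eq_of_reflTransGen_scopeEdge_of_kind_eq_leaf hu h
  · exact (hT.eq_of_reflTransGen_scopeEdge_of_kind_eq_leaf hv h).symm

end IsInducedTree

end SPN

theorem induced_spn_unique_indicator_per_variable_general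
    {V : Type} [Fintype V] [DecidableEq V] {N : ℕ} {S : SPN V N}
    (hC : S.Complete) (hD : S.Decomposable)
    {TV : Finset V} {TE : Finset (V × V)} (hT : S.IsInducedTree TV TE)
    {n : Fin N} (hn : n ∈ S.scope S.root) :
    ∃! v, v ∈ TV ∧ S.kind v = NodeKind.leaf ∧ S.leafVar v = n := by
  obtain ⟨v, hvT, hv, hvn⟩ := hT.exists_leaf_of_mem_scope hC hT.root_mem hn
  refine ⟨v, ⟨hvT, hv, hvn⟩, ?_⟩
  rintro w ⟨hwT, hw, hwn⟩
  exact hT.injOn_leafVar hD ⟨hwT, hw⟩ ⟨hvT, hv⟩ (hwn.trans hvn.symm)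

/-- If `T = (TV, TE)` is an induced SPN of a complete and
decomposable SPN `S` over Boolean variables `X_1, …, X_N` whose root has scope
`{X_1, …, X_N}`, then for every variable `X_n` there is exactly one leaf of `S`
that is an indicator over `X_n` among the nodes of `T`. -/
theorem induced_spn_unique_indicator_per_variable
    {V : Type} [Fintype V] [DecidableEq V] {N : ℕ} (S : SPN V N)
    (hC : S.Complete) (hD : S.Decomposable)
    (hroot : S.scope S.root = Finset.univ)
    (TV : Finset V) (TE : Finset (V × V)) (hT : S.IsInducedTree TV TE) :
    ∀ n : Fin N, ∃! v, v ∈ TV ∧ S.kind v = NodeKind.leaf ∧ S.leafVar v = n := by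
  intro n
  exact induced_spn_unique_indicator_per_variable_general hC hD hT (hroot ▸ Finset.mem_univ n)
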